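/- For every ε > 0 and every integer m ≥ 1, there exists L such that every 2^n-edge-connected graph G with minimum degree at least L, where n = 2 + m + ⌈log₂(1/ε)⌉, contains 2^m pairwise edge-disjoint spanning trees T₁,…,T_{2^m} with Σ_{i∈[2^m]} deg_{T_i}(v) ≤ ε·deg_G(v) for every vertex v. -/

import Mathlib

/-- A simple graph is `k`-edge-connected: deleting any fewer than `k` edges leaves
it connected. -/
def SGEdgeConn {V : Type} (G : SimpleGraph V) (k : ℕ) : Prop :=
  ∀ s : Set (Sym2 V), s ⊆ G.edgeSet → Nat.card s < k → (G.deleteEdges s).Connected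

open Finset

structure InBase {E : Type} [Fintype E] (f : Finset E → ℤ) (x : E → ℝ) : Prop where
  nonneg : ∀ e, 0 ≤ x e
  le_one : ∀ e, x e ≤ 1
  le : ∀ A : Finset E, ∑ e ∈ A, x e ≤ f A
  eq : ∑ e, x e = f univ

structure Submod {E : Type} [DecidableEq E] (f : Finset E → ℤ) : Prop where
  empty : f ∅ = 0
  sub : ∀ A B, f (A ∪ B) + f (A ∩ B) ≤ f A + f B

def Tight {E : Type} (f : Finset E → ℤ) (x : E → ℝ) (A : Finset E) : Prop :=
  ∑ e ∈ A, x e = f A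

theorem tight_both {E : Type} [DecidableEq E] {f : Finset E → ℤ} {x : E → ℝ}
    (hs : Submod f) (hle : ∀ A : Finset E, ∑ e ∈ A, x e ≤ f A) {A B : Finset E}
    (hA : Tight f x A) (hB : Tight f x B) : Tight f x (A ∪ B) ∧ Tight f x (A ∩ B) := by
  have h1 := hle (A ∪ B)
  have h2 := hle (A ∩ B)
  have h3 := Finset.sum_union_inter (s₁ := A) (s₂ := B) (f := x)
  have h4 : ((f (A ∪ B) : ℝ)) + f (A ∩ B) ≤ f A + f B := by exact_mod_cast hs.sub A B
  unfold Tight at *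
  constructor <;> linarith

theorem tight_sup {E ι : Type} [DecidableEq E] {f : Finset E → ℤ} {x : E → ℝ}
    (hs : Submod f) (hle : ∀ A : Finset E, ∑ e ∈ A, x e ≤ f A) (s : Finset ι)
    (g : ι → Finset E) (h : ∀ i ∈ s, Tight f x (g i)) : Tight f x (s.sup g) := by
  classical
  induction s using Finset.induction_on with
  | empty => simp [Tight, hs.empty]
  | insert a s ha ih =>
    rw [Finset.sup_insert]
    exact (tight_both hs hle (h _ (by simp)) (ih fun i hi => h i (by simp [hi]))).1

theorem tight_inf {E ι : Type} [Fintype E] [DecidableEq E] {f : Finset E → ℤ} {x : E → ℝ}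
    (hs : Submod f) (hx : InBase f x) (s : Finset ι)
    (g : ι → Finset E) (h : ∀ i ∈ s, Tight f x (g i)) : Tight f x (s.inf g) := by
  classical
  induction s using Finset.induction_on with
  | empty => simpa [Tight] using hx.eq
  | insert a s ha ih =>
    rw [Finset.inf_insert]
    exact (tight_both hs hx.le (h _ (by simp)) (ih fun i hi => h i (by simp [hi]))).2

theorem exists_classes {E : Type} [Fintype E] [DecidableEq E] {f : Finset E → ℤ} {x : E → ℝ}
    (hs : Submod f) (hx : InBase f x) :
    ∃ D : E → Finset E,
      (∀ A, Tight f x A → ∀ e e', D e = D e' → e ∈ A → e' ∈ A) ∧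
      (∀ e, 0 < x e → x e < 1 → ∃ e', e' ≠ e ∧ D e' = D e ∧ 0 < x e' ∧ x e' < 1) := by
  classical
  let D : E → Finset E := fun e =>
    ((univ : Finset (Finset E)).filter (fun A => Tight f x A ∧ e ∈ A)).inf id
  have hDt : ∀ e, Tight f x (D e) := fun e =>
    tight_inf hs hx _ _ (by intro A hA; simpa using (Finset.mem_filter.1 hA).2.1)
  have hself : ∀ e, e ∈ D e := by
    intro e
    simp only [D, Finset.mem_inf, Finset.mem_filter, id]
    rintro A ⟨_, _, h⟩
    exact h
  have hmin : ∀ e A, Tight f x A → e ∈ A → D e ⊆ A := by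
    intro e A hA he
    exact Finset.inf_le (f := id) (by simp [hA, he])
  refine ⟨D, ?_, ?_⟩
  · intro A hA e e' hee he
    exact hmin e A hA he (hee ▸ hself e')
  · intro e h0 h1
    by_contra hcon
    push Not at hcon
    let R := (D e).filter (fun e' => D e' ≠ D e)
    have hR : Tight f x R := by
      have : R = R.sup D := by
        apply Finset.Subset.antisymm
        · intro a ha
          exact Finset.mem_sup.2 ⟨a, ha, hself a⟩
        · intro a ha
          obtain ⟨b, hb, hab⟩ := Finset.mem_sup.1 ha
          have hb' := Finset.mem_filter.1 hb
          have hsub := hmin b _ (hDt e) hb'.1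
          refine Finset.mem_filter.2 ⟨hsub hab, ?_⟩
          intro hae
          apply hb'.2
          apply Finset.Subset.antisymm hsub
          rw [← hae]
          exact hmin a _ (hDt b) hab
      rw [this]
      exact tight_sup hs hx.le _ _ (fun i _ => hDt i)
    let C := (D e).filter (fun e' => ¬ D e' ≠ D e)
    have hsum : ∑ a ∈ R, x a + ∑ a ∈ C, x a = ∑ a ∈ D e, x a :=
      Finset.sum_filter_add_sum_filter_not _ _ _
    have heC : e ∈ C := by simp [C, hself]
    have hrest : ∃ z : ℤ, ∑ a ∈ C.erase e, x a = z := by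
      refine ⟨∑ a ∈ C.erase e, ⌊x a⌋, ?_⟩
      push_cast
      apply Finset.sum_congr rfl
      intro a ha
      have ha' := Finset.mem_erase.1 ha
      have hDa : D a = D e := by simpa using (Finset.mem_filter.1 ha'.2).2
      by_cases hpos : 0 < x a
      · have := hcon a ha'.1 hDa hpos
        have : x a = 1 := le_antisymm (hx.le_one a) this
        simp [this]
      · have : x a = 0 := le_antisymm (not_lt.1 hpos) (hx.nonneg a)
        simp [this]
    obtain ⟨z, hz⟩ := hrest
    have h2 := Finset.add_sum_erase C x heC
    have h3 := hDt e
    unfold Tight at h3 hR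
    have h4 : x e = ((f (D e) - f R - z : ℤ) : ℝ) := by push_cast; linarith
    rw [h4] at h0 h1
    have h0' : (0 : ℤ) < f (D e) - f R - z := by exact_mod_cast h0
    have h1' : f (D e) - f R - z < (1 : ℤ) := by exact_mod_cast h1
    omega

noncomputable def Frac {E : Type} [Fintype E] (x : E → ℝ) : Finset E := by
  classical exact univ.filter (fun e => 0 < x e ∧ x e < 1)

theorem mem_Frac {E : Type} [Fintype E] {x : E → ℝ} {e : E} :
    e ∈ Frac x ↔ 0 < x e ∧ x e < 1 := by simp [Frac]

theorem exists_extreme {E J : Type} [Fintype E] {f : Finset E → ℤ} {x : E → ℝ}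
    (hx : InBase f x) (l : J → (E → ℝ) →ₗ[ℝ] ℝ) :
    ∃ z, InBase f z ∧ (∀ j, l j z = l j x) ∧ (∀ e, e ∉ Frac x → z e = x e) ∧
      ∀ d : E → ℝ, (∀ e, e ∉ Frac z → d e = 0) → (∀ A, Tight f z A → ∑ e ∈ A, d e = 0) →
        (∀ j, l j d = 0) → d = 0 := by
  classical
  let P : Set (E → ℝ) := {z | InBase f z ∧ (∀ j, l j z = l j x) ∧ ∀ e, e ∉ Frac x → z e = x e}
  have hP : IsCompact P := by
    have hcl : IsClosed P := by
      have : P = (⋂ e, {z | 0 ≤ z e}) ∩ (⋂ e, {z | z e ≤ 1}) ∩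
          (⋂ A : Finset E, {z : E → ℝ | ∑ e ∈ A, z e ≤ (f A : ℝ)}) ∩ {z : E → ℝ | ∑ e, z e = (f univ : ℝ)} ∩
          (⋂ j, {z | l j z = l j x}) ∩ (⋂ e, ⋂ (_ : e ∉ Frac x), {z | z e = x e}) := by
        ext z
        simp only [P, Set.mem_ofPred_eq, Set.mem_inter_iff, Set.mem_iInter]
        constructor
        · rintro ⟨⟨a, b, c, d⟩, e, f⟩
          exact ⟨⟨⟨⟨⟨a, b⟩, c⟩, d⟩, e⟩, f⟩
        · rintro ⟨⟨⟨⟨⟨a, b⟩, c⟩, d⟩, e⟩, f⟩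
          exact ⟨⟨a, b, c, d⟩, e, f⟩
      rw [this]
      refine (((((isClosed_iInter fun e => ?_).inter (isClosed_iInter fun e => ?_)).inter
        (isClosed_iInter fun A => ?_)).inter ?_).inter (isClosed_iInter fun j => ?_)).inter
        (isClosed_iInter fun e => isClosed_iInter fun _ => ?_)
      · exact isClosed_le (by fun_prop) (by fun_prop)
      · exact isClosed_le (by fun_prop) (by fun_prop)
      · exact isClosed_le (by fun_prop) (by fun_prop)
      · exact isClosed_eq (by fun_prop) (by fun_prop)
      · exact isClosed_eq ((l j).continuous_of_finiteDimensional) (by fun_prop)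
      · exact isClosed_eq (by fun_prop) (by fun_prop)
    refine IsCompact.of_isClosed_subset (isCompact_Icc (a := (0 : E → ℝ)) (b := 1)) hcl ?_
    rintro z ⟨hz, -⟩
    exact ⟨fun e => hz.nonneg e, fun e => hz.le_one e⟩
  obtain ⟨z, hz⟩ := hP.extremePoints_nonempty ⟨x, hx, fun _ => rfl, fun _ _ => rfl⟩
  have hzP : z ∈ P := hz.1
  refine ⟨z, hzP.1, hzP.2.1, hzP.2.2, ?_⟩
  intro d hd hdA hdl
  -- a small multiple of `d` can be added
  have key : ∀ᶠ t : ℝ in nhds 0, z + t • d ∈ P := by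
    have hc : ∀ A : Finset E, Continuous fun t : ℝ => ∑ e ∈ A, (z + t • d) e := by
      intro A
      simp only [Pi.add_apply, Pi.smul_apply, smul_eq_mul]
      fun_prop
    have hce : ∀ e : E, Continuous fun t : ℝ => (z + t • d) e := by
      intro e
      simp only [Pi.add_apply, Pi.smul_apply, smul_eq_mul]
      fun_prop
    have h1 : ∀ᶠ t : ℝ in nhds 0, ∀ e, 0 ≤ (z + t • d) e ∧ (z + t • d) e ≤ 1 := by
      rw [Filter.eventually_all]
      intro e
      by_cases he : e ∈ Frac z
      · have he' := mem_Frac.1 he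
        have a1 := (hce e).continuousAt.eventually (lt_mem_nhds (a := (0:ℝ)) (b := (z + (0:ℝ) • d) e) (by simpa using he'.1))
        have a2 := ((hce e).tendsto 0).eventually_lt_const (u := 1) (by simpa using he'.2)
        filter_upwards [a1, a2] with t b1 b2
        exact ⟨b1.le, b2.le⟩
      · refine Filter.Eventually.of_forall fun t => ?_
        simp [hd e he, hzP.1.nonneg e, hzP.1.le_one e]
    have h2 : ∀ᶠ t : ℝ in nhds 0, ∀ A : Finset E, ∑ e ∈ A, (z + t • d) e ≤ f A := by
      rw [Filter.eventually_all]
      intro A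
      by_cases hA : Tight f z A
      · refine Filter.Eventually.of_forall fun t => ?_
        have := hdA A hA
        simp only [Pi.add_apply, Pi.smul_apply, smul_eq_mul, Finset.sum_add_distrib,
          ← Finset.mul_sum, this, mul_zero, add_zero]
        exact hA.le
      · have hlt : ∑ e ∈ A, z e < f A := lt_of_le_of_ne (hzP.1.le A) hA
        have a2 := ((hc A).tendsto 0).eventually_lt_const (u := (f A : ℝ)) (by simpa using hlt)
        filter_upwards [a2] with t b using b.le
    filter_upwards [h1, h2] with t a b
    refine ⟨⟨fun e => (a e).1, fun e => (a e).2, b, ?_⟩, ?_, ?_⟩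
    · have := hdA univ hzP.1.eq
      simp only [Pi.add_apply, Pi.smul_apply, smul_eq_mul, Finset.sum_add_distrib,
          ← Finset.mul_sum, this, mul_zero, add_zero]
      exact hzP.1.eq
    · intro j
      simp [hdl j, hzP.2.1 j]
    · intro e he
      have : e ∉ Frac z := by
        rw [mem_Frac, hzP.2.2 e he, ← mem_Frac]; exact he
      simp [hd e this, hzP.2.2 e he]
  have key2 : ∀ᶠ t : ℝ in nhds 0, z - t • d ∈ P := by
    have hneg : Filter.Tendsto (fun t : ℝ => -t) (nhds 0) (nhds 0) := by
      simpa using (continuous_neg (G := ℝ)).tendsto 0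
    filter_upwards [hneg.eventually key] with t ht
    simpa [sub_eq_add_neg] using ht
  obtain ⟨s, hs0, hs⟩ := Metric.eventually_nhds_iff.1 (key.and key2)
  obtain ⟨k1, k2⟩ := @hs (s / 2) (by simp [abs_of_pos hs0, hs0])
  have hseg : z ∈ openSegment ℝ (z + (s / 2) • d) (z - (s / 2) • d) := by
    refine ⟨1/2, 1/2, by norm_num, by norm_num, by norm_num, ?_⟩
    ext e
    simp
    ring
  have := hz.2 k1 k2 hseg
  have h5 : (s / 2) • d = 0 := by simpa using this
  rcases smul_eq_zero.1 h5 with h | h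
  · linarith
  · exact h

theorem exists_vertex {E J : Type} [Fintype E] [DecidableEq E] {f : Finset E → ℤ} {x : E → ℝ}
    (hs : Submod f) (hx : InBase f x) (l : J → (E → ℝ) →ₗ[ℝ] ℝ) :
    ∃ (z : E → ℝ) (D : E → Finset E), InBase f z ∧ (∀ j, l j z = l j x) ∧
      (∀ e, e ∉ Frac x → z e = x e) ∧
      (∀ e ∈ Frac z, ∃ e' ∈ Frac z, e' ≠ e ∧ D e' = D e) ∧
      ∀ d : E → ℝ, (∀ e, e ∉ Frac z → d e = 0) →
        (∀ c ∈ (Frac z).image D, ∑ e ∈ Frac z with D e = c, d e = 0) →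
        (∀ j, l j d = 0) → d = 0 := by
  obtain ⟨z, hz, hzl, hzx, hext⟩ := exists_extreme hx l
  obtain ⟨D, hD1, hD2⟩ := exists_classes hs hz
  refine ⟨z, D, hz, hzl, hzx, ?_, ?_⟩
  · intro e he
    obtain ⟨h0, h1⟩ := mem_Frac.1 he
    obtain ⟨e', a, b, c, d⟩ := hD2 e h0 h1
    exact ⟨e', mem_Frac.2 ⟨c, d⟩, a, b⟩
  · intro d hd hc hl
    refine hext d hd ?_ hl
    intro A hA
    have h1 : ∑ e ∈ A, d e = ∑ e ∈ A ∩ Frac z, d e := by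
      symm
      apply Finset.sum_subset Finset.inter_subset_left
      intro e he hne
      exact hd e fun h => hne (Finset.mem_inter.2 ⟨he, h⟩)
    rw [h1, ← Finset.sum_fiberwise_of_maps_to (t := (A ∩ Frac z).image D) (g := D)
      (fun e he => Finset.mem_image_of_mem D he)]
    apply Finset.sum_eq_zero
    intro c hcm
    obtain ⟨a, ha, rfl⟩ := Finset.mem_image.1 hcm
    have ha' := Finset.mem_inter.1 ha
    rw [← hc (D a) (Finset.mem_image_of_mem D ha'.2)]
    apply Finset.sum_congr _ (fun _ _ => rfl)
    ext e
    simp only [Finset.mem_filter, Finset.mem_inter]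
    constructor
    · rintro ⟨⟨_, h⟩, h'⟩
      exact ⟨h, h'⟩
    · rintro ⟨h, h'⟩
      exact ⟨⟨hD1 A hA a e h'.symm ha'.1, h⟩, h'⟩

theorem half_image {E κ : Type} [DecidableEq κ] (F : Finset E) (D : E → κ)
    (h : ∀ e ∈ F, ∃ e' ∈ F, e' ≠ e ∧ D e' = D e) : 2 * #(F.image D) ≤ #F := by
  classical
  rw [Finset.card_eq_sum_card_image D F, mul_comm, ← smul_eq_mul]
  apply Finset.card_nsmul_le_sum
  intro c hc
  obtain ⟨e, he, rfl⟩ := Finset.mem_image.1 hc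
  obtain ⟨e', he', hne, hD⟩ := h e he
  have : ({e, e'} : Finset E) ⊆ F.filter (fun a => D a = D e) := by
    intro a ha
    rcases Finset.mem_insert.1 ha with rfl | ha
    · simp [he]
    · rw [Finset.mem_singleton.1 ha]; simp [he', hD]
  have h2 := Finset.card_le_card this
  rwa [Finset.card_pair hne.symm] at h2

noncomputable def linSys {E J : Type} (F : Finset E)
    (l : J → (E → ℝ) →ₗ[ℝ] ℝ) : (E → ℝ) →ₗ[ℝ] ({e // e ∉ F} ⊕ J → ℝ) :=
  LinearMap.pi (Sum.elim (fun e => LinearMap.proj e.1) l)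

theorem linSys_inj {E J : Type} (F : Finset E)
    (l : J → (E → ℝ) →ₗ[ℝ] ℝ)
    (inj : ∀ d : E → ℝ, (∀ e, e ∉ F → d e = 0) → (∀ j, l j d = 0) → d = 0) :
    Function.Injective (linSys F l) := by
  rw [← LinearMap.ker_eq_bot, LinearMap.ker_eq_bot']
  intro d hd
  apply inj d
  · intro e he
    have := congrFun hd (Sum.inl ⟨e, he⟩)
    simpa [linSys] using this
  · intro j
    have := congrFun hd (Sum.inr j)
    simpa [linSys] using this

theorem card_compl_sum {E J : Type} [Fintype E] [Fintype J] (F : Finset E) :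
    Nat.card ({e // e ∉ F} ⊕ J) + #F = Fintype.card E + Fintype.card J := by
  classical
  have : Fintype.card {e // e ∉ F} = Fintype.card E - #F := by
    rw [Fintype.card_subtype_compl]; simp
  have h2 := Finset.card_le_univ F
  rw [Nat.card_eq_fintype_card, Fintype.card_sum, this]
  omega

theorem lin_card {E J : Type} [Fintype E] [Fintype J] (F : Finset E)
    (l : J → (E → ℝ) →ₗ[ℝ] ℝ)
    (inj : ∀ d : E → ℝ, (∀ e, e ∉ F → d e = 0) → (∀ j, l j d = 0) → d = 0) :
    #F ≤ Fintype.card J := by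
  classical
  have h := LinearMap.finrank_le_finrank_of_injective (linSys_inj F l inj)
  rw [Module.finrank_fintype_fun_eq_card, Module.finrank_fintype_fun_eq_card,
    ← Nat.card_eq_fintype_card (α := _ ⊕ _)] at h
  have := card_compl_sum (J := J) F
  omega

theorem lin_surj {E J : Type} [Fintype E] [Fintype J] (F : Finset E)
    (l : J → (E → ℝ) →ₗ[ℝ] ℝ)
    (inj : ∀ d : E → ℝ, (∀ e, e ∉ F → d e = 0) → (∀ j, l j d = 0) → d = 0)
    (hle : Fintype.card J ≤ #F) (w : J → ℝ) :
    ∃ d : E → ℝ, (∀ e, e ∉ F → d e = 0) ∧ ∀ j, l j d = w j := by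
  classical
  have hi := linSys_inj F l inj
  have h1 := lin_card F l inj
  have h2 := card_compl_sum (J := J) F
  have hs : Function.Surjective (linSys F l) := by
    rw [← LinearMap.injective_iff_surjective_of_finrank_eq_finrank]
    · exact hi
    · rw [Module.finrank_fintype_fun_eq_card, Module.finrank_fintype_fun_eq_card,
        ← Nat.card_eq_fintype_card (α := _ ⊕ _)]
      omega
  obtain ⟨d, hd⟩ := hs (Sum.elim 0 w)
  refine ⟨d, ?_, ?_⟩
  · intro e he
    have := congrFun hd (Sum.inl ⟨e, he⟩)
    simpa [linSys] using this
  · intro j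
    have := congrFun hd (Sum.inr j)
    simpa [linSys] using this

noncomputable def sumOn {E : Type} (A : Finset E) : (E → ℝ) →ₗ[ℝ] ℝ :=
  ∑ e ∈ A, LinearMap.proj e

theorem sumOn_apply {E : Type} (A : Finset E) (d : E → ℝ) : sumOn A d = ∑ e ∈ A, d e := by
  simp [sumOn]

theorem rounding {E I : Type} [Fintype E] [DecidableEq E] [DecidableEq I]
    {f : Finset E → ℤ} (hs : Submod f)
    (δ : I → Finset E) (h2 : ∀ e, ∀ W : Finset I, #{v ∈ W | e ∈ δ v} ≤ 2) (W : Finset I) :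
    ∀ x : E → ℝ, InBase f x → ∃ y : E → ℝ, InBase f y ∧ Frac y = ∅ ∧
      (∀ e, e ∉ Frac x → y e = x e) ∧ ∀ v ∈ W, ∑ e ∈ δ v, y e ≤ ∑ e ∈ δ v, x e + 4 := by
  induction W using Finset.strongInduction with
  | H W ih =>
  intro x hx
  obtain ⟨z, D, hz, hzl, hzx, hpair, hext⟩ :=
    exists_vertex hs hx (fun v : W => sumOn (δ v.1))
  have hzl' : ∀ v ∈ W, ∑ e ∈ δ v, z e = ∑ e ∈ δ v, x e := by
    intro v hv
    have := hzl ⟨v, hv⟩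
    simpa only [sumOn_apply] using this
  by_cases hF : Frac z = ∅
  · exact ⟨z, hz, hF, hzx, fun v hv => by rw [hzl' v hv]; linarith⟩
  have hcard : #(Frac z) ≤ #((Frac z).image D) + #W := by
    have := lin_card (J := ((Frac z).image D : Finset _) ⊕ W) (Frac z)
      (Sum.elim (fun c => sumOn ((Frac z).filter (fun e => D e = c.1))) (fun v => sumOn (δ v.1)))
      (by
        intro d hd hj
        apply hext d hd
        · intro c hc
          have := hj (Sum.inl ⟨c, hc⟩)
          simpa [sumOn_apply] using this
        · intro v
          simpa using hj (Sum.inr v))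
    simpa only [Fintype.card_sum, Fintype.card_coe] using this
  have hhalf := half_image (Frac z) D hpair
  have hex : ∃ v ∈ W, #(Frac z ∩ δ v) ≤ 4 := by
    by_contra hcon
    push Not at hcon
    have hFpos : 0 < #(Frac z) := Finset.card_pos.2 (Finset.nonempty_iff_ne_empty.2 hF)
    have e1 : ∑ v ∈ W, #(Frac z ∩ δ v) = ∑ e ∈ Frac z, #{v ∈ W | e ∈ δ v} := by
      have := Finset.sum_card_bipartiteAbove_eq_sum_card_bipartiteBelow
        (s := W) (t := Frac z) (fun v e => e ∈ δ v)
      simp only [Finset.bipartiteAbove, Finset.bipartiteBelow] at this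
      rw [← this]
      apply Finset.sum_congr rfl
      intro v _
      rw [Finset.filter_mem_eq_inter]
    have e2 : ∑ e ∈ Frac z, #{v ∈ W | e ∈ δ v} ≤ #(Frac z) * 2 := by
      simpa using Finset.sum_le_card_nsmul (Frac z) (fun e => #{v ∈ W | e ∈ δ v}) 2
        (fun e _ => h2 e W)
    have e3 : #W * 5 ≤ ∑ v ∈ W, #(Frac z ∩ δ v) := by
      simpa using Finset.card_nsmul_le_sum W (fun v => #(Frac z ∩ δ v)) 5
        (fun v hv => hcon v hv)
    omega
  obtain ⟨v, hv, hv4⟩ := hex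
  obtain ⟨y, hy, hyF, hyz, hyW⟩ := ih (W.erase v) (Finset.erase_ssubset hv) z hz
  refine ⟨y, hy, hyF, ?_, ?_⟩
  · intro e he
    have : e ∉ Frac z := by rw [mem_Frac, hzx e he, ← mem_Frac]; exact he
    rw [hyz e this, hzx e he]
  · intro u hu
    by_cases huv : u = v
    · subst huv
      rw [← hzl' u hu]
      have : ∑ e ∈ δ u, y e ≤ ∑ e ∈ δ u, (z e + if e ∈ Frac z then (1:ℝ) else 0) := by
        apply Finset.sum_le_sum
        intro e _
        split_ifs with he
        · have := hy.le_one e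
          have := hz.nonneg e
          linarith
        · rw [hyz e he]; simp
      rw [Finset.sum_add_distrib, ← Finset.sum_filter, Finset.sum_const, Finset.filter_mem_eq_inter,
        Finset.inter_comm, nsmul_eq_mul, mul_one] at this
      have h4 : ((#(Frac z ∩ δ u) : ℕ) : ℝ) ≤ 4 := by exact_mod_cast hv4
      linarith
    · rw [← hzl' u hu]
      exact hyW u (Finset.mem_erase.2 ⟨huv, hu⟩)

theorem other_frac {E : Type} [Fintype E] [DecidableEq E] {z : E → ℝ} (h0 : ∀ e, 0 ≤ z e)
    (h1 : ∀ e, z e ≤ 1) (C : Finset E) (n : ℤ) (hn : ∑ e ∈ C, z e = n) (e : E) (he : e ∈ C)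
    (hf : e ∈ Frac z) : ∃ e' ∈ C, e' ≠ e ∧ e' ∈ Frac z := by
  by_contra hcon
  push Not at hcon
  have hrest : ∑ a ∈ C.erase e, z a = ((∑ a ∈ C.erase e, ⌊z a⌋ : ℤ) : ℝ) := by
    push_cast
    apply Finset.sum_congr rfl
    intro a ha
    have ha' := Finset.mem_erase.1 ha
    have := hcon a ha'.2 ha'.1
    rw [mem_Frac] at this
    push Not at this
    by_cases hpos : 0 < z a
    · have : z a = 1 := le_antisymm (h1 a) (this hpos)
      simp [this]
    · have : z a = 0 := le_antisymm (not_lt.1 hpos) (h0 a)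
      simp [this]
  have h2 := Finset.add_sum_erase C z he
  obtain ⟨hf0, hf1⟩ := mem_Frac.1 hf
  have h4 : z e = ((n - ∑ a ∈ C.erase e, ⌊z a⌋ : ℤ) : ℝ) := by
    rw [Int.cast_sub, ← hrest]; linarith
  rw [h4] at hf0 hf1
  have h0' : (0 : ℤ) < n - ∑ a ∈ C.erase e, ⌊z a⌋ := by exact_mod_cast hf0
  have h1' : n - ∑ a ∈ C.erase e, ⌊z a⌋ < (1 : ℤ) := by exact_mod_cast hf1
  omega

theorem intersection {E P : Type} [Fintype E] [DecidableEq E] [DecidableEq P]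
    {f : Finset E → ℤ} (hs : Submod f) (p : E → P) (x : E → ℝ) (hx : InBase f x)
    (hint : ∀ q, ∃ n : ℤ, ∑ e with p e = q, x e = n) :
    ∃ y : E → ℝ, InBase f y ∧ Frac y = ∅ ∧
      ∀ q, ∑ e with p e = q, y e = ∑ e with p e = q, x e := by
  obtain ⟨z, D, hz, hzl, hzx, hpair, hext⟩ :=
    exists_vertex hs hx (fun q : P => sumOn (univ.filter (fun e => p e = q)))
  simp only [sumOn_apply] at hzl
  refine ⟨z, hz, ?_, hzl⟩
  by_contra hF
  obtain ⟨e0, he0⟩ := Finset.nonempty_iff_ne_empty.2 hF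
  have hpair2 : ∀ e ∈ Frac z, ∃ e' ∈ Frac z, e' ≠ e ∧ p e' = p e := by
    intro e he
    obtain ⟨n, hn⟩ := hint (p e)
    obtain ⟨e', a, b, c⟩ := other_frac hz.nonneg hz.le_one (univ.filter (fun a => p a = p e)) n
      (by rw [hzl, hn]) e (by simp) he
    exact ⟨e', c, b, by simpa using a⟩
  have c1 := half_image (Frac z) D hpair
  have c2 := half_image (Frac z) p hpair2
  obtain ⟨d, hd, hj⟩ := lin_surj (J := ((Frac z).image D : Finset _) ⊕ ((Frac z).image p : Finset _))
      (Frac z)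
      (Sum.elim (fun c => sumOn ((Frac z).filter (fun e => D e = c.1)))
        (fun c => sumOn ((Frac z).filter (fun e => p e = c.1))))
      (by
        intro d hd hj
        apply hext d hd
        · intro c hc
          have := hj (Sum.inl ⟨c, hc⟩)
          simpa [sumOn_apply] using this
        · intro q
          rw [sumOn_apply]
          have e1 : ∑ e with p e = q, d e = ∑ e ∈ Frac z with p e = q, d e := by
            symm
            apply Finset.sum_subset (Finset.filter_subset_filter _ (Finset.subset_univ _))
            intro e he hne
            apply hd
            intro h
            exact hne (Finset.mem_filter.2 ⟨h, (Finset.mem_filter.1 he).2⟩)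
          rw [e1]
          by_cases hq : q ∈ (Frac z).image p
          · have := hj (Sum.inr ⟨q, hq⟩)
            simpa [sumOn_apply] using this
          · apply Finset.sum_eq_zero
            intro e he
            exfalso
            obtain ⟨a, b⟩ := Finset.mem_filter.1 he
            exact hq (Finset.mem_image.2 ⟨e, a, b⟩))
      (by simp only [Fintype.card_sum, Fintype.card_coe]; omega) (Sum.elim (fun c => if c.1 = D e0 then 1 else 0) 0)
  have s1 : ∑ e ∈ Frac z, d e = 1 := by
    rw [← Finset.sum_fiberwise_of_maps_to (t := (Frac z).image D) (g := D)
      (fun e he => Finset.mem_image_of_mem D he)]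
    have : ∀ c ∈ (Frac z).image D, ∑ e ∈ Frac z with D e = c, d e = if c = D e0 then 1 else 0 := by
      intro c hc
      have := hj (Sum.inl ⟨c, hc⟩)
      simpa [sumOn_apply] using this
    rw [Finset.sum_congr rfl this, Finset.sum_ite_eq', if_pos (Finset.mem_image_of_mem D he0)]
  have s2 : ∑ e ∈ Frac z, d e = 0 := by
    rw [← Finset.sum_fiberwise_of_maps_to (t := (Frac z).image p) (g := p)
      (fun e he => Finset.mem_image_of_mem p he)]
    apply Finset.sum_eq_zero
    intro c hc
    have := hj (Sum.inr ⟨c, hc⟩)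
    simpa [sumOn_apply] using this
  linarith

/-- A maximal point below `x0` whose total can be computed on a tight set. -/
theorem exists_max {E : Type} [Fintype E] [DecidableEq E] {f : Finset E → ℤ} (hs : Submod f)
    (hpos : ∀ A, 0 ≤ f A) (a : ℝ) (ha : 0 ≤ a) :
    ∃ (x : E → ℝ) (T : Finset E), (∀ e, 0 ≤ x e) ∧ (∀ e, x e ≤ a) ∧
      (∀ A : Finset E, ∑ e ∈ A, x e ≤ f A) ∧ Tight f x T ∧ ∀ e, e ∉ T → x e = a := by
  classical
  let P : Set (E → ℝ) := Set.Icc 0 (fun _ => a) ∩ ⋂ A : Finset E, {z : E → ℝ | ∑ e ∈ A, z e ≤ (f A : ℝ)}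
  have hP : IsCompact P := by
    apply isCompact_Icc.inter_right
    exact isClosed_iInter fun A => isClosed_le (by fun_prop) (by fun_prop)
  have hne : P.Nonempty := by
    refine ⟨0, ⟨le_refl _, fun _ => ha⟩, ?_⟩
    simp only [Set.mem_iInter]
    intro A
    simpa using hpos A
  obtain ⟨x, hxP, hmax⟩ := hP.exists_isMaxOn hne (f := fun z => ∑ e, z e) (by fun_prop)
  have hle : ∀ A : Finset E, ∑ e ∈ A, x e ≤ f A := fun A => Set.mem_iInter.1 hxP.2 A
  refine ⟨x, (univ.filter (fun A => Tight f x A)).sup id, fun e => hxP.1.1 e, fun e => hxP.1.2 e,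
    hle, ?_, ?_⟩
  · apply tight_sup hs hle
    intro A hA
    simpa using hA
  · intro e he
    by_contra hne
    have hlt : x e < a := lt_of_le_of_ne (hxP.1.2 e) hne
    have hnt : ∀ A, e ∈ A → ∑ b ∈ A, x b < f A := by
      intro A heA
      refine lt_of_le_of_ne (hle A) fun hA => he ?_
      exact Finset.mem_sup.2 ⟨A, Finset.mem_filter.2 ⟨Finset.mem_univ _, hA⟩, heA⟩
    have hsum : ∀ (t : ℝ) (A : Finset E), ∑ b ∈ A, (x + (Pi.single e t : E → ℝ)) b
        = ∑ b ∈ A, x b + if e ∈ A then t else 0 := by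
      intro t A
      simp only [Pi.add_apply, Finset.sum_add_distrib, Pi.single_apply, Finset.sum_ite_eq']
    have key : ∀ᶠ t : ℝ in nhdsWithin 0 (Set.Ioi 0), x + (Pi.single e t : E → ℝ) ∈ P := by
      have k1 : ∀ᶠ t : ℝ in nhdsWithin 0 (Set.Ioi 0), x e + t < a :=
        Filter.Eventually.filter_mono nhdsWithin_le_nhds
          (((by fun_prop : Continuous fun t : ℝ => x e + t).tendsto 0).eventually_lt_const
            (by simpa using hlt))
      have k2 : ∀ᶠ t : ℝ in nhdsWithin 0 (Set.Ioi 0), ∀ A : Finset E, e ∈ A → ∑ b ∈ A, x b + t < f A := by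
        rw [Filter.eventually_all]
        intro A
        by_cases heA : e ∈ A
        · have : ∀ᶠ t : ℝ in nhdsWithin 0 (Set.Ioi 0), ∑ b ∈ A, x b + t < f A :=
            Filter.Eventually.filter_mono nhdsWithin_le_nhds
            (((by fun_prop : Continuous fun t : ℝ => ∑ b ∈ A, x b + t).tendsto 0).eventually_lt_const
              (by simpa using hnt A heA))
          filter_upwards [this] with t ht _ using ht
        · exact Filter.Eventually.of_forall fun t h => absurd h heA
      filter_upwards [k1, k2, self_mem_nhdsWithin] with t h1 h2 h3
      have h3' : 0 < t := h3
      refine ⟨⟨?_, ?_⟩, ?_⟩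
      · intro b
        have := hxP.1.1 b
        by_cases hb : b = e
        · subst hb
          simp at this ⊢
          linarith
        · simpa [hb] using this
      · intro b
        have := hxP.1.2 b
        by_cases hb : b = e
        · subst hb
          simp
          linarith
        · simpa [hb] using this
      · rw [Set.mem_iInter]
        intro A
        change ∑ b ∈ A, (x + (Pi.single e t : E → ℝ)) b ≤ (f A : ℝ)
        rw [hsum]
        split_ifs with hA
        · exact (h2 A hA).le
        · simpa using hle A
    obtain ⟨t, ht, htpos⟩ := (key.and self_mem_nhdsWithin).exists
    have h5 := hmax ht
    have htpos' : 0 < t := htpos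
    simp only [Set.mem_ofPred_eq] at h5
    rw [hsum] at h5
    simp at h5
    linarith

/-- The spanning subgraph with edge set `A`. -/
def subG {V : Type} {G : SimpleGraph V} (A : Finset G.edgeSet) : SimpleGraph V :=
  SimpleGraph.fromEdgeSet (Subtype.val '' (A : Set G.edgeSet))

theorem subG_adj {V : Type} {G : SimpleGraph V} (A : Finset G.edgeSet) (u v : V) :
    (subG A).Adj u v ↔ ∃ h : G.Adj u v, (⟨s(u, v), h⟩ : G.edgeSet) ∈ A := by
  unfold subG
  rw [SimpleGraph.fromEdgeSet_adj]
  constructor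
  · rintro ⟨⟨⟨e, he⟩, h1, rfl⟩, h2⟩
    exact ⟨he, h1⟩
  · rintro ⟨h, h1⟩
    exact ⟨⟨_, h1, rfl⟩, h.ne⟩

theorem subG_edgeSet {V : Type} {G : SimpleGraph V} (A : Finset G.edgeSet) :
    (subG A).edgeSet = Subtype.val '' (A : Set G.edgeSet) := by
  ext e
  induction e using Sym2.ind with
  | _ u v =>
    rw [SimpleGraph.mem_edgeSet, subG_adj]
    constructor
    · rintro ⟨h, h1⟩
      exact ⟨_, h1, rfl⟩
    · rintro ⟨⟨e, he⟩, h1, h2⟩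
      subst h2
      exact ⟨he, h1⟩

theorem subG_le {V : Type} {G : SimpleGraph V} (A : Finset G.edgeSet) : subG A ≤ G := by
  intro u v h
  exact ((subG_adj A u v).1 h).1

theorem subG_univ {V : Type} {G : SimpleGraph V} [Fintype G.edgeSet] :
    subG (univ : Finset G.edgeSet) = G := by
  ext u v
  rw [subG_adj]
  simp

theorem subG_card_edges {V : Type} {G : SimpleGraph V} (A : Finset G.edgeSet) :
    Nat.card (subG A).edgeSet = #A := by
  rw [subG_edgeSet, Nat.card_image_of_injective Subtype.val_injective]
  simp

theorem subG_card_nbr {V : Type} [DecidableEq V] {G : SimpleGraph V} (A : Finset G.edgeSet)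
    (v : V) : Nat.card ((subG A).neighborSet v) = #{e ∈ A | v ∈ e.1} := by
  rw [← Nat.card_congr ((subG A).incidenceSetEquivNeighborSet v)]
  have : (subG A).incidenceSet v = Subtype.val '' ((A.filter (fun e => v ∈ e.1) : Finset _) : Set G.edgeSet) := by
    unfold SimpleGraph.incidenceSet
    rw [subG_edgeSet]
    ext e
    constructor
    · rintro ⟨⟨a, ha, rfl⟩, h⟩
      exact ⟨a, by simpa using ⟨ha, h⟩, rfl⟩
    · rintro ⟨a, ha, rfl⟩
      have ha' := Finset.mem_filter.1 (Finset.mem_coe.1 ha)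
      exact ⟨⟨a, ha'.1, rfl⟩, ha'.2⟩
  rw [this, Nat.card_image_of_injective Subtype.val_injective]
  simp

/-- Potentials constant along the edges of `A`. -/
def potK {V : Type} {G : SimpleGraph V} (A : Finset G.edgeSet) : Submodule ℝ (V → ℝ) where
  carrier := {φ | ∀ e ∈ A, ∀ u v, e.1 = s(u, v) → φ u = φ v}
  add_mem' := by
    intro a b ha hb e he u v h
    simp [ha e he u v h, hb e he u v h]
  zero_mem' := by
    intro e he u v h
    rfl
  smul_mem' := by
    intro c a ha e he u v h
    simp [ha e he u v h]

theorem mem_potK {V : Type} {G : SimpleGraph V} {A : Finset G.edgeSet} {φ : V → ℝ} :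
    φ ∈ potK A ↔ ∀ e ∈ A, ∀ u v, e.1 = s(u, v) → φ u = φ v := Iff.rfl

theorem potK_finrank {V : Type} [Fintype V] {G : SimpleGraph V} (A : Finset G.edgeSet) :
    Module.finrank ℝ (potK A) = Nat.card (subG A).ConnectedComponent := by
  classical
  let L : ((subG A).ConnectedComponent → ℝ) →ₗ[ℝ] (V → ℝ) :=
    LinearMap.funLeft ℝ ℝ (subG A).connectedComponentMk
  have hinj : Function.Injective L := by
    apply LinearMap.funLeft_injective_of_surjective
    exact Quot.mk_surjective
  have hrange : LinearMap.range L = potK A := by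
    ext φ
    rw [LinearMap.mem_range, mem_potK]
    constructor
    · rintro ⟨g, rfl⟩ e he u v huv
      have hadj : (subG A).Adj u v := by
        rw [← SimpleGraph.mem_edgeSet, subG_edgeSet, ← huv]
        exact ⟨e, he, rfl⟩
      have := SimpleGraph.ConnectedComponent.sound hadj.reachable
      simp only [L, LinearMap.funLeft_apply]
      rw [this]
    · intro h
      have hadj : ∀ u v, (subG A).Adj u v → φ u = φ v := by
        intro u v huv
        obtain ⟨h1, h2⟩ := (subG_adj A u v).1 huv
        exact h _ h2 u v rfl
      have hw : ∀ u v, (subG A).Walk u v → φ u = φ v := by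
        intro u v w
        induction w with
        | nil => rfl
        | cons h _ ih => exact (hadj _ _ h).trans ih
      exact ⟨SimpleGraph.ConnectedComponent.lift φ (fun u v w _ => hw u v w), rfl⟩
  have : Fintype (subG A).ConnectedComponent := Fintype.ofFinite _
  rw [← hrange, LinearMap.finrank_range_of_inj hinj, Module.finrank_fintype_fun_eq_card,
    Nat.card_eq_fintype_card]

noncomputable def grk {V : Type} [Fintype V] {G : SimpleGraph V} (A : Finset G.edgeSet) : ℤ :=
  (Fintype.card V : ℤ) - Module.finrank ℝ (potK A)

theorem grk_nonneg {V : Type} [Fintype V] {G : SimpleGraph V} (A : Finset G.edgeSet) :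
    0 ≤ grk A := by
  have := Submodule.finrank_le (potK A)
  rw [Module.finrank_fintype_fun_eq_card] at this
  unfold grk
  omega

theorem grk_empty {V : Type} [Fintype V] {G : SimpleGraph V} :
    grk (∅ : Finset G.edgeSet) = 0 := by
  have : potK (∅ : Finset G.edgeSet) = ⊤ := by
    ext φ
    simp [mem_potK]
  unfold grk
  rw [this, finrank_top, Module.finrank_fintype_fun_eq_card]
  simp

theorem grk_submod {V : Type} [Fintype V] {G : SimpleGraph V} [DecidableEq G.edgeSet]
    (A B : Finset G.edgeSet) : grk (A ∪ B) + grk (A ∩ B) ≤ grk A + grk B := by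
  have h := Submodule.finrank_sup_add_finrank_inf_eq (potK A) (potK B)
  have h1 : potK A ⊓ potK B = potK (A ∪ B) := by
    ext φ
    simp only [Submodule.mem_inf, mem_potK, Finset.mem_union]
    constructor
    · rintro ⟨a, b⟩ e (he | he)
      · exact a e he
      · exact b e he
    · intro a
      exact ⟨fun e he => a e (Or.inl he), fun e he => a e (Or.inr he)⟩
  have h2 : potK A ⊔ potK B ≤ potK (A ∩ B) := by
    apply sup_le
    · intro φ h e he
      exact h e (Finset.mem_inter.1 he).1
    · intro φ h e he
      exact h e (Finset.mem_inter.1 he).2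
  have h3 := Submodule.finrank_mono h2
  rw [h1] at h
  unfold grk
  omega

theorem connected_of_grk {V : Type} [Fintype V] {G : SimpleGraph V} [Nonempty V]
    (A : Finset G.edgeSet) (h : (Fintype.card V : ℤ) - 1 ≤ grk A) : (subG A).Connected := by
  have : Nat.card (subG A).ConnectedComponent ≤ 1 := by
    rw [← potK_finrank]
    unfold grk at h
    omega
  have hs : Subsingleton (subG A).ConnectedComponent := Finite.card_le_one_iff_subsingleton.1 this
  refine SimpleGraph.Connected.mk (fun u v => ?_)
  exact SimpleGraph.ConnectedComponent.exact (Subsingleton.elim _ _)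

theorem grk_univ {V : Type} [Fintype V] {G : SimpleGraph V} [Fintype G.edgeSet]
    (h : G.Connected) : grk (univ : Finset G.edgeSet) = (Fintype.card V : ℤ) - 1 := by
  have := h.preconnected.subsingleton_connectedComponent
  have hne := h.nonempty
  have : Nat.card G.ConnectedComponent = 1 := by
    rw [Nat.card_eq_one_iff_unique]
    exact ⟨this, ⟨G.connectedComponentMk hne.some⟩⟩
  unfold grk
  rw [potK_finrank, subG_univ, this]
  simp

theorem cut_bound {V : Type} [Fintype V] {G : SimpleGraph V} [Fintype G.edgeSet]
    [DecidableEq G.edgeSet] (K : ℕ) (hG : SGEdgeConn G K) (T : Finset G.edgeSet)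
    (hc : 2 ≤ Nat.card (subG T).ConnectedComponent) :
    Nat.card (subG T).ConnectedComponent * K ≤ #Tᶜ * 2 := by
  classical
  have : Fintype (subG T).ConnectedComponent := Fintype.ofFinite _
  rw [Nat.card_eq_fintype_card] at hc ⊢
  let cm := (subG T).connectedComponentMk
  let bd : (subG T).ConnectedComponent → Finset G.edgeSet := fun C =>
    univ.filter (fun e => ∃ u v, e.1 = s(u, v) ∧ cm u = C ∧ cm v ≠ C)
  have hsub : ∀ C, bd C ⊆ Tᶜ := by
    intro C e he
    obtain ⟨u, v, huv, hu, hv⟩ := (Finset.mem_filter.1 he).2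
    rw [Finset.mem_compl]
    intro heT
    have hadj : (subG T).Adj u v := by
      rw [← SimpleGraph.mem_edgeSet, subG_edgeSet, ← huv]
      exact ⟨e, heT, rfl⟩
    apply hv
    rw [← hu]
    exact (SimpleGraph.ConnectedComponent.sound hadj.reachable).symm
  have hbig : ∀ C, K ≤ #(bd C) := by
    intro C
    by_contra hlt
    push Not at hlt
    have hconn := hG (Subtype.val '' (bd C : Set G.edgeSet)) (by
      rintro _ ⟨e, _, rfl⟩
      exact e.2) (by
      rw [Nat.card_image_of_injective Subtype.val_injective]
      simpa using hlt)
    obtain ⟨C', hC'⟩ := Fintype.exists_ne_of_one_lt_card (by omega) C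
    obtain ⟨u, hu⟩ := Quot.exists_rep C
    obtain ⟨v, hv⟩ := Quot.exists_rep C'
    obtain ⟨w⟩ := hconn.preconnected u v
    obtain ⟨d, _, h1, h2⟩ := w.exists_boundary_dart {a | cm a = C} hu (by
      intro h
      have h' : cm v = C := h
      exact hC' (hv.symm.trans h'))
    have hadj := d.adj
    rw [SimpleGraph.deleteEdges_adj] at hadj
    apply hadj.2
    refine ⟨⟨s(d.fst, d.snd), hadj.1⟩, ?_, rfl⟩
    rw [Finset.mem_coe, Finset.mem_filter]
    exact ⟨Finset.mem_univ _, d.fst, d.snd, rfl, h1, h2⟩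
  have e1 : ∑ C, #(bd C) = ∑ e ∈ Tᶜ, #{C | e ∈ bd C} := by
    have := Finset.sum_card_bipartiteAbove_eq_sum_card_bipartiteBelow
      (s := univ) (t := Tᶜ) (fun C e => e ∈ bd C)
    simp only [Finset.bipartiteAbove, Finset.bipartiteBelow] at this
    rw [← this]
    apply Finset.sum_congr rfl
    intro v _
    rw [Finset.filter_mem_eq_inter, Finset.inter_eq_right.2 (hsub v)]
  have e2 : ∑ e ∈ Tᶜ, #{C | e ∈ bd C} ≤ #Tᶜ * 2 := by
    have := Finset.sum_le_card_nsmul Tᶜ (fun e => #{C | e ∈ bd C}) 2 (by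
      rintro ⟨e, he⟩ _
      induction e using Sym2.ind with
      | _ a b =>
      refine (Finset.card_le_card (t := {cm a, cm b}) ?_).trans Finset.card_le_two
      intro C hC
      obtain ⟨u, v, huv, hu, hv⟩ := (Finset.mem_filter.1 (Finset.mem_filter.1 hC).2).2
      rcases Sym2.eq_iff.1 huv with ⟨rfl, rfl⟩ | ⟨rfl, rfl⟩
      · simp [hu]
      · simp [hu])
    simpa using this
  have e3 : Fintype.card (subG T).ConnectedComponent * K ≤ ∑ C, #(bd C) := by
    simpa using Finset.card_nsmul_le_sum univ (fun C => #(bd C)) K (fun C _ => hbig C)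
  omega

theorem exists_frac {V : Type} [Fintype V] {G : SimpleGraph V} [Fintype G.edgeSet]
    [DecidableEq G.edgeSet] (K k : ℕ) (hG : SGEdgeConn G K) (hk : 1 ≤ k) (hK : 2 * k ≤ K) :
    ∃ x : G.edgeSet → ℝ, InBase (fun A => k * grk A) x ∧ ∀ e, x e ≤ 2 * k / K := by
  have hconn : G.Connected := by
    have := hG ∅ (by simp) (by simp; omega)
    simpa using this
  have hs : Submod (fun A : Finset G.edgeSet => (k : ℤ) * grk A) := by
    constructor
    · simp [grk_empty]
    · intro A B
      have := grk_submod A B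
      simp only [← mul_add]
      exact mul_le_mul_of_nonneg_left this (by positivity)
  have hKpos : (0 : ℝ) < K := by
    have : 0 < K := by omega
    exact_mod_cast this
  obtain ⟨x, T, h0, h1, hle, hT, hout⟩ := exists_max hs
    (fun A => mul_nonneg (by positivity) (grk_nonneg A)) (2 * k / K) (by positivity)
  refine ⟨x, ⟨h0, fun e => (h1 e).trans ?_, hle, le_antisymm (hle univ) ?_⟩, h1⟩
  · rw [div_le_one hKpos]
    exact_mod_cast hK
  · rw [← Finset.sum_add_sum_compl T, Finset.sum_congr rfl (fun e he => hout e (Finset.mem_compl.1 he)),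
      show ∑ e ∈ T, x e = _ from hT, grk_univ hconn, Finset.sum_const, nsmul_eq_mul]
    push_cast
    have hcc := potK_finrank T
    by_cases hc : 2 ≤ Nat.card (subG T).ConnectedComponent
    · have hb := cut_bound K hG T hc
      have hb' : (Nat.card (subG T).ConnectedComponent : ℝ) * K ≤ (#Tᶜ : ℝ) * 2 := by
        exact_mod_cast hb
      have hg : (grk T : ℝ) = (Fintype.card V : ℝ) - Nat.card (subG T).ConnectedComponent := by
        unfold grk
        rw [hcc]
        push_cast
        rfl
      rw [hg]
      have : (k : ℝ) * Nat.card (subG T).ConnectedComponent ≤ (#Tᶜ : ℝ) * (2 * k / K) := by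
        rw [mul_div_assoc', le_div_iff₀ hKpos]
        have hk0 : (0 : ℝ) ≤ k := by positivity
        nlinarith
      have hk0 : (0 : ℝ) ≤ k := by positivity
      nlinarith
    · have hg : ((Fintype.card V : ℤ) - 1) ≤ grk T := by
        unfold grk
        omega
      have hg' : ((Fintype.card V : ℝ) - 1) ≤ grk T := by exact_mod_cast hg
      have hk0 : (0 : ℝ) ≤ k := by positivity
      have : (0 : ℝ) ≤ (#Tᶜ : ℝ) * (2 * k / K) := by positivity
      nlinarith [mul_le_mul_of_nonneg_left hg' hk0]

/-- The `i`-th colSlice of a set of coloured edges. -/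
def colSlice {E : Type} [Fintype E] [DecidableEq E] {k : ℕ} (A : Finset (E × Fin k)) (i : Fin k) :
    Finset E := univ.filter (fun e => (e, i) ∈ A)

theorem sum_slice {E : Type} [Fintype E] [DecidableEq E] {k : ℕ} (A : Finset (E × Fin k))
    (z : E × Fin k → ℝ) : ∑ a ∈ A, z a = ∑ i, ∑ e ∈ colSlice A i, z (e, i) := by
  have : ∑ a ∈ A, z a = ∑ a, if a ∈ A then z a else 0 := by
    rw [← Finset.sum_filter]
    simp
  rw [this, Fintype.sum_prod_type_right]
  apply Finset.sum_congr rfl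
  intro i _
  unfold colSlice
  rw [Finset.sum_filter]

theorem frac_empty {E : Type} [Fintype E] {y : E → ℝ} (h : Frac y = ∅) (h0 : ∀ e, 0 ≤ y e)
    (h1 : ∀ e, y e ≤ 1) (e : E) : y e = 0 ∨ y e = 1 := by
  have : e ∉ Frac y := by simp [h]
  rw [mem_Frac] at this
  push Not at this
  rcases (h0 e).lt_or_eq with h | h
  · exact Or.inr (le_antisymm (h1 e) (this h))
  · exact Or.inl h.symm

theorem exists_trees {V : Type} [Fintype V] {G : SimpleGraph V} [Fintype G.edgeSet]
    [DecidableEq G.edgeSet] (k : ℕ) (hk : 1 ≤ k) (hconn : G.Connected) (y : G.edgeSet → ℝ)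
    (hy : InBase (fun A => k * grk A) y) (hyF : Frac y = ∅) :
    ∃ B : Fin k → Finset G.edgeSet, (∀ i, (subG (B i)).IsTree) ∧
      (∀ i j e, e ∈ B i → e ∈ B j → i = j) ∧
      ∀ A : Finset G.edgeSet, ∑ i, (#(A ∩ B i) : ℝ) = ∑ e ∈ A, y e := by
  have hkpos : (0 : ℝ) < k := by exact_mod_cast hk
  let f : Finset (G.edgeSet × Fin k) → ℤ := fun A => ∑ i, grk (colSlice A i)
  have hs : Submod f := by
    constructor
    · apply Finset.sum_eq_zero
      intro i _
      have : colSlice (∅ : Finset (G.edgeSet × Fin k)) i = ∅ := by simp [colSlice]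
      rw [this, grk_empty]
    · intro A B
      simp only [f, ← Finset.sum_add_distrib]
      apply Finset.sum_le_sum
      intro i _
      have h1 : colSlice (A ∪ B) i = colSlice A i ∪ colSlice B i := by
        ext e; simp [colSlice]
      have h2 : colSlice (A ∩ B) i = colSlice A i ∩ colSlice B i := by
        ext e; simp [colSlice]
      rw [h1, h2]
      exact grk_submod _ _
  have hsu : ∀ i, colSlice (univ : Finset (G.edgeSet × Fin k)) i = univ := by
    intro i; simp [colSlice]
  let x : G.edgeSet × Fin k → ℝ := fun a => y a.1 / k
  have hx : InBase f x := by
    refine ⟨fun a => div_nonneg (hy.nonneg _) hkpos.le, ?_, ?_, ?_⟩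
    · intro a
      have h1 : (1 : ℝ) ≤ k := by exact_mod_cast hk
      have h2 := hy.le_one a.1
      simp only [x]
      rw [div_le_one hkpos]
      linarith
    · intro A
      rw [sum_slice]
      simp only [f, x]
      push_cast
      apply Finset.sum_le_sum
      intro i _
      rw [← Finset.sum_div, div_le_iff₀ hkpos]
      have := hy.le (colSlice A i)
      push_cast at this
      linarith
    · rw [sum_slice]
      simp only [f, x, hsu]
      push_cast
      apply Finset.sum_congr rfl
      intro i _
      rw [← Finset.sum_div, div_eq_iff hkpos.ne', hy.eq]
      push_cast
      ring
  have hfib : ∀ (w : G.edgeSet × Fin k → ℝ) (q : G.edgeSet),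
      ∑ a with a.1 = q, w a = ∑ i, w (q, i) := by
    intro w q
    rw [Finset.sum_filter, Fintype.sum_prod_type_right]
    simp
  obtain ⟨z, hz, hzF, hzs⟩ := intersection hs (Prod.fst : G.edgeSet × Fin k → G.edgeSet) x hx (by
    intro q
    rw [hfib]
    have : ∑ i : Fin k, x (q, i) = y q := by
      simp [x]
      field_simp
    rw [this]
    rcases frac_empty hyF hy.nonneg hy.le_one q with h | h
    · exact ⟨0, by simp [h]⟩
    · exact ⟨1, by simp [h]⟩)
  have hzy : ∀ q, ∑ i, z (q, i) = y q := by
    intro q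
    rw [← hfib, hzs, hfib]
    simp [x]
    field_simp
  have h01 := frac_empty hzF hz.nonneg hz.le_one
  classical
  let B : Fin k → Finset G.edgeSet := fun i => univ.filter (fun e => z (e, i) = 1)
  have hsumB : ∀ (A : Finset G.edgeSet) i, ∑ e ∈ A, z (e, i) = #(A ∩ B i) := by
    intro A i
    have : ∀ e ∈ A, z (e, i) = if e ∈ B i then 1 else 0 := by
      intro e _
      rcases h01 (e, i) with h | h
      · simp [B, h]
      · simp [B, h]
    rw [Finset.sum_congr rfl this, ← Finset.sum_filter, Finset.filter_mem_eq_inter]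
    simp
  -- bound for one colour
  have hone : ∀ (A : Finset G.edgeSet) (i : Fin k), ∑ e ∈ A, z (e, i) ≤ grk A := by
    intro A i
    have h := hz.le (A ×ˢ {i})
    have hsl : ∀ j, colSlice (A ×ˢ {i}) j = if j = i then A else ∅ := by
      intro j
      ext e
      by_cases hj : j = i <;> simp [colSlice, hj, eq_comm (a := i)]
    rw [sum_slice] at h
    simp only [f, hsl] at h
    rw [Finset.sum_eq_single i, Finset.sum_eq_single i] at h
    · simpa using h
    · intro j _ hj
      simp [hj, grk_empty]
    · simp
    · intro j _ hj
      simp [hj]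
    · simp
  have hcol : ∀ i, ∑ e, z (e, i) = grk (univ : Finset G.edgeSet) := by
    have htot := hz.eq
    rw [← Finset.univ_product_univ, Finset.univ_product_univ, sum_slice] at htot
    simp only [f, hsu] at htot
    push_cast at htot
    have := (Finset.sum_eq_sum_iff_of_le (s := univ) (f := fun i => ∑ e, z (e, i))
      (g := fun _ : Fin k => (grk (univ : Finset G.edgeSet) : ℝ)) (fun i _ => hone univ i)).1 htot
    intro i
    exact this i (Finset.mem_univ i)
  have hcardB : ∀ i, (#(B i) : ℤ) = (Fintype.card V : ℤ) - 1 := by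
    intro i
    have h1 := hcol i
    rw [hsumB, Finset.univ_inter, grk_univ hconn] at h1
    exact_mod_cast h1
  have hne := hconn.nonempty
  refine ⟨B, ?_, ?_, ?_⟩
  · intro i
    rw [SimpleGraph.isTree_iff_connected_and_card]
    constructor
    · apply connected_of_grk
      have h1 := hone (B i) i
      rw [hsumB, Finset.inter_self] at h1
      have h2 : (#(B i) : ℤ) ≤ grk (B i) := by exact_mod_cast h1
      rw [← hcardB i]
      exact h2
    · rw [subG_card_edges, Nat.card_eq_fintype_card]
      have := hcardB i
      omega
  · intro i j e hi hj
    by_contra hij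
    have hi' : z (e, i) = 1 := by simpa [B] using hi
    have hj' : z (e, j) = 1 := by simpa [B] using hj
    have h1 : ∑ l ∈ ({i, j} : Finset (Fin k)), z (e, l) ≤ ∑ l, z (e, l) :=
      Finset.sum_le_sum_of_subset_of_nonneg (Finset.subset_univ _) (fun l _ _ => hz.nonneg _)
    rw [hzy, Finset.sum_pair hij, hi', hj'] at h1
    have := hy.le_one e
    linarith
  · intro A
    rw [Finset.sum_congr rfl (fun i _ => (hsumB A i).symm), Finset.sum_comm]
    exact Finset.sum_congr rfl (fun e _ => hzy e)

/-- for every `ε > 0` and `m ≥ 1` there is `L` such that every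
`2^n`-edge-connected graph with minimum degree at least `L`, where
`n = 2 + m + ⌈log₂(1/ε)⌉`, has `2^m` pairwise edge-disjoint spanning trees whose
total degree at each vertex is at most `ε` times its degree in `G`. -/
theorem stmt15 (ε : ℝ) (hε : 0 < ε) (m : ℕ) (hm : 1 ≤ m) :
    ∃ L : ℕ, ∀ (V : Type) [Fintype V] (G : SimpleGraph V),
      SGEdgeConn G (2 ^ (2 + m + ⌈Real.logb 2 (1 / ε)⌉₊)) →
      (∀ v : V, L ≤ Nat.card (G.neighborSet v)) →
      ∃ T : Fin (2 ^ m) → SimpleGraph V,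
        (∀ i, T i ≤ G) ∧ (∀ i, (T i).IsTree) ∧
        (Pairwise fun i j => Disjoint ((T i).edgeSet) ((T j).edgeSet)) ∧
        ∀ v : V,
          (∑ i, (Nat.card ((T i).neighborSet v) : ℝ)) ≤
            ε * (Nat.card (G.neighborSet v) : ℝ) := by
  refine ⟨⌈8 / ε⌉₊, ?_⟩
  intro V _ G hG hdeg
  classical
  have : Fintype G.edgeSet := Fintype.ofFinite _
  set c := ⌈Real.logb 2 (1 / ε)⌉₊ with hcdef
  have hpow : (1 / ε : ℝ) ≤ 2 ^ c := by
    have h1 : Real.logb 2 (1 / ε) ≤ (c : ℝ) := Nat.le_ceil _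
    have h2 := (Real.logb_le_iff_le_rpow (by norm_num) (by positivity)).1 h1
    rwa [Real.rpow_natCast] at h2
  have hconn : G.Connected := by
    have := hG ∅ (by simp) (by simp)
    simpa using this
  have hle : 2 * 2 ^ m ≤ 2 ^ (2 + m + c) := by
    rw [← pow_succ']
    exact Nat.pow_le_pow_right (by norm_num) (by omega)
  have hs : Submod (fun A : Finset G.edgeSet => ((2 ^ m : ℕ) : ℤ) * grk A) := by
    constructor
    · simp [grk_empty]
    · intro A B
      have := grk_submod A B
      simp only [← mul_add]
      exact mul_le_mul_of_nonneg_left this (by positivity)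
  obtain ⟨x, hx, hxa⟩ := exists_frac (2 ^ (2 + m + c)) (2 ^ m) hG Nat.one_le_two_pow hle
  let δ : V → Finset G.edgeSet := fun v => univ.filter (fun e => v ∈ e.1)
  obtain ⟨y, hy, hyF, -, hyδ⟩ := rounding hs δ (by
    rintro ⟨e, he⟩ W
    induction e using Sym2.ind with
    | _ a b =>
    refine (Finset.card_le_card (t := {a, b}) ?_).trans Finset.card_le_two
    intro v hv
    simpa [δ] using (Finset.mem_filter.1 hv).2) univ x hx
  obtain ⟨B, hB1, hB2, hB3⟩ := exists_trees (2 ^ m) Nat.one_le_two_pow hconn y hy hyF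
  refine ⟨fun i => subG (B i), fun i => subG_le _, hB1, ?_, ?_⟩
  · intro i j hij
    rw [subG_edgeSet, subG_edgeSet, Set.disjoint_left]
    rintro _ ⟨e, he, rfl⟩ ⟨e', he', h⟩
    rw [Subtype.val_injective h] at he'
    exact hij (hB2 i j e he he')
  · intro v
    have h1 : ∀ i, (Nat.card ((subG (B i)).neighborSet v) : ℝ) = #(δ v ∩ B i) := by
      intro i
      rw [subG_card_nbr]
      congr 2
      ext e
      simp [δ, and_comm]
    have h2 : Nat.card (G.neighborSet v) = #(δ v) := by
      have := subG_card_nbr (univ : Finset G.edgeSet) v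
      rwa [subG_univ] at this
    rw [Finset.sum_congr rfl (fun i _ => h1 i), hB3, h2]
    have h3 := hyδ v (Finset.mem_univ v)
    have h4 : ∑ e ∈ δ v, x e ≤ #(δ v) * (ε / 2) := by
      rw [← nsmul_eq_mul]
      apply Finset.sum_le_card_nsmul
      intro e _
      refine (hxa e).trans ?_
      push_cast
      rw [pow_add, pow_add, div_le_iff₀ (by positivity)]
      rw [div_le_iff₀ hε] at hpow
      have hm0 : (0 : ℝ) < 2 ^ m := by positivity
      nlinarith [mul_le_mul_of_nonneg_left hpow hm0.le]
    have h5 : (8 / ε : ℝ) ≤ #(δ v) := by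
      have := hdeg v
      rw [h2] at this
      exact (Nat.le_ceil _).trans (by exact_mod_cast this)
    rw [div_le_iff₀ hε] at h5
    nlinarith
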